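/- Let K be a number field and k ≥ 1 an integer. Let A be an additive group automorphism of 𝓞_K and let f : 𝕏_{K,k} → 𝕏_{K,k} be a homeomorphism satisfying f(t + X) = A(t) + f(X) for all t ∈ 𝓞_K and X ∈ 𝕏_{K,k}. Then there exist a field automorphism τ of K, a unit ε ∈ 𝓞_K^×, and t₀ ∈ 𝓞_K such that A(x) = ε·τ(x) for all x ∈ 𝓞_K and f(X) = t₀ + ε·τ(X) := {t₀ + ε·τ(x) : x ∈ X} for all X ∈ 𝕏_{K,k}. Conversely, every such pair (A, f), with A(x) = ε·τ(x) and f(X) = t₀ + ε·τ(X) for a field automorphism τ of K, a unit ε ∈ 𝓞_K^×, and t₀ ∈ 𝓞_K, is such an extended symmetry (in particular ε·τ(X) ∈ 𝕏_{K,k} whenever X ∈ 𝕏_{K,k}, and f is a homeomorphism). -/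

import Mathlib

open NumberField

/-- The product (Cantor) topology on the power set `𝒫(G) ≅ {0,1}^G`. -/
noncomputable instance powerSetTopology (G : Type*) : TopologicalSpace (Set G) :=
  TopologicalSpace.induced
    (fun (S : Set G) (g : G) => @decide (g ∈ S) (Classical.propDecidable _))
    inferInstance

/-- The shift space `𝕏_{K,k}` of admissible sets: subsets of `𝓞 K` missing at least
one residue class modulo `𝔭^k` for every nonzero prime ideal `𝔭`. -/
def admissibleSets (K : Type*) [Field K] [NumberField K] (k : ℕ) : Set (Set (𝓞 K)) :=
  {X | ∀ P : Ideal (𝓞 K), P.IsPrime → P ≠ ⊥ → ∃ c : 𝓞 K, ∀ y ∈ X, y - c ∉ P ^ k}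

/-!
Let `d ∈ f {0}`. By continuity and equivariance, a point `x` of `X` that sees no other point of `X`
in a fixed finite window puts `d + A x` into `f X`. Replacing the points of a finite admissible set
by sparse ones in the same classes modulo an integer with many divisors shows that `A` maps finite
admissible sets to admissible sets. If `d + A s ∈ f S` for some finite `S` not containing `s`, then
adding to `S` a system of residues modulo a suitable `𝔭 ^ k` which avoids only the class of `s` is a
contradiction; with the same argument for the inverse of `f` this gives `f X = d + A X`.

For a prime `𝔮` of degree one and large norm `p`, preservation of finite admissible sets forces
`A⁻¹ (𝔮 ^ k) = 𝔭 ^ k` for a prime `𝔭` of norm `p`: there are at most `[K : ℚ] < p` such primes, too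
few for their powers to cover a coset of another subgroup of index `p ^ k`. Every element is
congruent to an integer modulo `𝔭`, so `A (x * y) * A 1` and `A x * A y` agree modulo `𝔮`, hence
are equal, and `A` is a ring automorphism up to the unit `A 1`.
-/

section PowerSetTopology

variable {G H : Type*}

lemma continuous_decide_mem (g : G) :
    Continuous fun X : Set G => @decide (g ∈ X) (Classical.propDecidable _) := by
  have hcont : Continuous fun (X : Set G) (g : G) => @decide (g ∈ X) (Classical.propDecidable _) :=
    continuous_induced_dom
  exact (continuous_apply g).comp hcont

lemma isOpen_setOf_mem (g : G) : IsOpen {X : Set G | g ∈ X} := by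
  convert (isOpen_discrete ({true} : Set Bool)).preimage (continuous_decide_mem g)
  ext X
  simp

lemma continuous_preimage (φ : H → G) : Continuous (Set.preimage φ) :=
  continuous_induced_rng.2 (continuous_pi fun y => continuous_decide_mem (φ y))

/-- The homeomorphism of power sets induced by a bijection. -/
def imageHomeomorph (e : G ≃ H) : Set G ≃ₜ Set H where
  toEquiv := Equiv.Set.congr e
  continuous_toFun :=
    (continuous_preimage e.symm).congr fun X => (e.image_eq_preimage_symm X).symm
  continuous_invFun :=
    (continuous_preimage e).congr fun X => (e.symm.image_eq_preimage_symm X).symm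

lemma exists_finite_forall_inter_eq_of_mem_nhds {X : Set G} {U : Set (Set G)} (hU : U ∈ nhds X) :
    ∃ W : Set G, W.Finite ∧ ∀ Y : Set G, Y ∩ W = X ∩ W → Y ∈ U := by
  rw [nhds_induced, Filter.mem_comap] at hU
  obtain ⟨V, hV, hVU⟩ := hU
  rw [nhds_pi, Filter.mem_pi] at hV
  obtain ⟨W, hW, t, ht, htV⟩ := hV
  refine ⟨W, hW, fun Y hY => hVU (htV fun g hg => ?_)⟩
  have hgY : g ∈ Y ↔ g ∈ X := by simpa [hg] using Set.ext_iff.1 hY g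
  have hdec : @decide (g ∈ Y) (Classical.propDecidable _) =
      @decide (g ∈ X) (Classical.propDecidable _) := decide_eq_decide.2 hgY
  change @decide (g ∈ Y) (Classical.propDecidable _) ∈ t g
  exact hdec ▸ mem_of_mem_nhds (ht g)

lemma exists_finite_forall_inter_eq_mem {𝕏 : Set (Set G)} {F : 𝕏 → Set H} (hF : Continuous F)
    {X : 𝕏} {y : H} (hy : y ∈ F X) :
    ∃ W : Set G, W.Finite ∧ ∀ Y : 𝕏, (Y : Set G) ∩ W = (X : Set G) ∩ W → y ∈ F Y := by
  have hU : {Y | y ∈ F Y} ∈ nhds X := ((isOpen_setOf_mem y).preimage hF).mem_nhds hy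
  obtain ⟨V, hV, hVU⟩ := mem_nhds_subtype 𝕏 X _ |>.1 hU
  obtain ⟨W, hW, hWV⟩ := exists_finite_forall_inter_eq_of_mem_nhds hV
  exact ⟨W, hW, fun Y hY => hVU (hWV Y hY)⟩

lemma mem_of_forall_finite_mem {𝕏 : Set (Set G)} (h𝕏 : IsLowerSet 𝕏) {F : 𝕏 → Set H}
    (hF : Continuous F) {x : G} {y : H}
    (hfin : ∀ S : 𝕏, (S : Set G).Finite → y ∈ F S → x ∈ (S : Set G)) {X : 𝕏} (hy : y ∈ F X) :
    x ∈ (X : Set G) := by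
  obtain ⟨W, hW, hwin⟩ := exists_finite_forall_inter_eq_mem hF hy
  let S : 𝕏 := ⟨(X : Set G) ∩ W, h𝕏 Set.inter_subset_left X.2⟩
  exact (hfin S (hW.subset Set.inter_subset_right) (hwin S (by simp [S, Set.inter_assoc]))).1

end PowerSetTopology

lemma exists_forall_mem_forall_sub_notMem {G ι : Type*} [AddCommGroup G] [Finite ι]
    {U : ι → Set G} (hU : ∀ i, (U i).Infinite) {V W : Set G} (hV : V.Finite) (hW : W.Finite) :
    ∃ t : ι → G, (∀ i, t i ∈ U i \ V) ∧ Pairwise fun i j => t i - t j ∉ W := by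
  classical
  have := Fintype.ofFinite ι
  suffices H : ∀ s : Finset ι, ∃ t : ι → G, (∀ i ∈ s, t i ∈ U i \ V) ∧
      (s : Set ι).Pairwise fun i j => t i - t j ∉ W by
    obtain ⟨t, htU, htW⟩ := H Finset.univ
    exact ⟨t, fun i => htU i (Finset.mem_univ i), by simpa [Set.pairwise_univ] using htW⟩
  intro s
  induction s using Finset.induction_on with
  | empty => exact ⟨0, by simp, by simp⟩
  | insert a s ha ih =>
    obtain ⟨t, htU, htW⟩ := ih
    have hfin : (V ∪ ⋃ j ∈ s, ((· + t j) '' W ∪ (t j - ·) '' W)).Finite :=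
      hV.union (Set.Finite.biUnion s.finite_toSet fun j _ => (hW.image _).union (hW.image _))
    obtain ⟨x, hxU, hx⟩ := ((hU a).sdiff hfin).nonempty
    have hxV : x ∉ V := fun h => hx (Or.inl h)
    have hxt : ∀ j ∈ s, x - t j ∉ W ∧ t j - x ∉ W := fun j hj =>
      ⟨fun h => hx (Or.inr (Set.mem_biUnion hj (Or.inl ⟨_, h, sub_add_cancel _ _⟩))),
        fun h => hx (Or.inr (Set.mem_biUnion hj (Or.inr ⟨_, h, sub_sub_cancel _ _⟩)))⟩
    have hne : ∀ j ∈ s, j ≠ a := fun j hj h => ha (h ▸ hj)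
    refine ⟨Function.update t a x, fun i hi => ?_, ?_⟩
    · obtain rfl | hi := Finset.mem_insert.1 hi
      · simpa using ⟨hxU, hxV⟩
      · simpa [hne i hi] using htU i hi
    · rw [Finset.coe_insert, Set.pairwise_insert]
      constructor
      · intro i hi j hj hij
        simpa [hne i hi, hne j hj] using htW hi hj hij
      · intro j hj _
        simpa [hne j hj] using hxt j hj

section ExtendedSymmetry

variable {G : Type*} [AddCommGroup G] {𝕏 : Set (Set G)} {A : G ≃+ G} {f : 𝕏 ≃ₜ 𝕏}

/-- A family of subsets of `G` is translation invariant if it is a subsystem of the full shift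
`𝒫(G)`; closedness is not part of the notion. -/
def IsTranslationInvariant (𝕏 : Set (Set G)) : Prop :=
  ∀ t : G, ∀ X ∈ 𝕏, (t + ·) '' X ∈ 𝕏

/-- The pair `(A, f)` is an extended symmetry of `𝕏`: `f (t + X) = A t + f X`. The translate `t + X`
is encoded as a member `Y` of `𝕏` equal to it, so that translation invariance of `𝕏` is not needed
to write the condition down. -/
def IsExtendedSymmetry (A : G ≃+ G) (f : 𝕏 ≃ₜ 𝕏) : Prop :=
  ∀ (t : G) (X Y : 𝕏), (Y : Set G) = (t + ·) '' (X : Set G) →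
    (f Y : Set G) = (A t + ·) '' (f X : Set G)

namespace IsExtendedSymmetry

lemma symm (h𝕏 : IsTranslationInvariant 𝕏) (hf : IsExtendedSymmetry A f) :
    IsExtendedSymmetry A.symm f.symm := by
  intro t X Y hXY
  let Z : 𝕏 := ⟨(A.symm t + ·) '' (f.symm X : Set G), h𝕏 _ _ (f.symm X).2⟩
  have hZ : (f Z : Set G) = Y := by
    rw [hf (A.symm t) (f.symm X) Z rfl, f.apply_symm_apply, A.apply_symm_apply, hXY]
  rw [← Subtype.ext hZ, f.symm_apply_apply]

lemma nonempty_apply_singleton_zero [Nontrivial G] (h𝕏 : IsTranslationInvariant 𝕏)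
    (hf : IsExtendedSymmetry A f) (h0 : {0} ∈ 𝕏) : (f ⟨{0}, h0⟩ : Set G).Nonempty := by
  by_contra! hempty
  obtain ⟨t, ht⟩ := exists_ne (0 : G)
  let T : 𝕏 := ⟨(t + ·) '' {0}, h𝕏 t _ h0⟩
  have hT : f T = f ⟨{0}, h0⟩ := by
    apply Subtype.ext
    rw [hf t ⟨{0}, h0⟩ T rfl, hempty, Set.image_empty]
  exact ht (by simpa [T] using congrArg Subtype.val (f.injective hT))

lemma exists_finite_forall_add_mem (h𝕏 : IsTranslationInvariant 𝕏) (hf : IsExtendedSymmetry A f)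
    {h0 : {0} ∈ 𝕏} {d : G} (hd : d ∈ (f ⟨{0}, h0⟩ : Set G)) :
    ∃ W : Set G, W.Finite ∧ ∀ (X : 𝕏), ∀ t ∈ (X : Set G),
      (∀ x ∈ (X : Set G), x ≠ t → x - t ∉ W) → d + A t ∈ (f X : Set G) := by
  obtain ⟨W, hW, hwin⟩ :=
    exists_finite_forall_inter_eq_mem (continuous_subtype_val.comp f.continuous) hd
  refine ⟨W, hW, fun X t ht hX => ?_⟩
  let X' : 𝕏 := ⟨(-t + ·) '' (X : Set G), h𝕏 _ _ X.2⟩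
  have hX' : (X' : Set G) ∩ W = {0} ∩ W := by
    ext w
    refine and_congr_left fun hw => ⟨?_, ?_⟩
    · rintro ⟨x, hx, rfl⟩
      by_contra hne
      exact hX x hx (fun h => hne (by simp [h])) (by simpa [sub_eq_neg_add] using hw)
    · rintro rfl
      exact ⟨t, ht, neg_add_cancel t⟩
  have hXX' : (X : Set G) = (t + ·) '' (X' : Set G) := by
    change (X : Set G) = (t + ·) '' ((-t + ·) '' (X : Set G))
    rw [Set.image_image]
    simp only [add_neg_cancel_left, Set.image_id']
  rw [hf t X' X hXX']
  exact ⟨d, hwin X' hX', add_comm _ _⟩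

/- The sparse points `t i` see only themselves through the window of `d`, hence contribute
`d + A (t i)` to the image, and they stay out of the window of `y`. -/
lemma exists_insert_range_mem (h𝕏 : IsTranslationInvariant 𝕏) (h𝕏' : IsLowerSet 𝕏)
    (hf : IsExtendedSymmetry A f) {h0 : {0} ∈ 𝕏} {d : G} (hd : d ∈ (f ⟨{0}, h0⟩ : Set G))
    {S : 𝕏} (hS : (S : Set G).Finite) {y : G} (hy : y ∈ (f S : Set G))
    {ι : Type*} [Finite ι] {U : ι → Set G} (hU : ∀ i, (U i).Infinite) :
    ∃ t : ι → G, (∀ i, t i ∈ U i) ∧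
      ((S : Set G) ∪ Set.range t ∈ 𝕏 → insert y (Set.range fun i => d + A (t i)) ∈ 𝕏) := by
  obtain ⟨W, hW, hpoint⟩ := hf.exists_finite_forall_add_mem h𝕏 hd
  obtain ⟨V, hV, hwin⟩ :=
    exists_finite_forall_inter_eq_mem (continuous_subtype_val.comp f.continuous) hy
  obtain ⟨t, ht, htW⟩ := exists_forall_mem_forall_sub_notMem hU
    (hV.union (hS.biUnion fun x _ => hW.image (x - ·))) hW
  refine ⟨t, fun i => (ht i).1, fun hX => ?_⟩
  set X : 𝕏 := ⟨_, hX⟩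
  refine h𝕏' (Set.insert_subset ?_ (Set.range_subset_iff.2 fun i => ?_)) (f X).2
  · refine hwin X ?_
    have hdisj : Set.range t ∩ V = ∅ := by
      rw [← Set.disjoint_iff_inter_eq_empty, Set.disjoint_left]
      rintro _ ⟨i, rfl⟩ hi
      exact (ht i).2 (Or.inl hi)
    rw [Set.union_inter_distrib_right, hdisj, Set.union_empty]
  · refine hpoint X (t i) (Or.inr ⟨i, rfl⟩) ?_
    rintro _ (hx | ⟨j, rfl⟩) hne hxW
    · exact (ht i).2 (Or.inr (Set.mem_biUnion hx ⟨_, hxW, sub_sub_cancel _ _⟩))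
    · exact htW (fun h => hne (congrArg t h)) hxW

end IsExtendedSymmetry

lemma apply_eq_image_of_add_apply_mem {f : 𝕏 ≃ 𝕏} (h0 : {0} ∈ 𝕏) {d e : G}
    (hd : ∀ (X : 𝕏) (s : G), d + A s ∈ (f X : Set G) → s ∈ (X : Set G))
    (he : ∀ (X : 𝕏) (s : G), e + A.symm s ∈ (f.symm X : Set G) → s ∈ (X : Set G)) (X : 𝕏) :
    (f X : Set G) = (fun x => d + A x) '' (X : Set G) := by
  have hmem : ∀ (X : 𝕏), ∀ x ∈ (X : Set G), A (x - e) ∈ (f X : Set G) := fun X x hx =>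
    he (f X) _ (by simpa using hx)
  have hde : d = -A e := by
    have h := hd ⟨{0}, h0⟩ (A.symm (A (0 - e) - d)) (by simpa using hmem ⟨{0}, h0⟩ 0 rfl)
    rw [Set.mem_singleton_iff, map_eq_zero_iff A.symm A.symm.injective] at h
    rw [← sub_eq_zero.1 h, zero_sub, map_neg]
  refine Set.Subset.antisymm (fun y hy => ?_) ?_
  · exact ⟨A.symm (y - d), hd X _ (by simpa using hy), by simp⟩
  · rintro _ ⟨x, hx, rfl⟩
    simpa [hde, sub_eq_neg_add] using hmem X x hx

/-- The extended symmetry `X ↦ t + A X` of `𝕏` defined by an additive automorphism `A` and a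
translation `t` under which membership in `𝕏` is invariant. -/
noncomputable def translateImageHomeomorph (A : G ≃+ G) (t : G)
    (h : ∀ X, X ∈ 𝕏 ↔ (fun x => t + A x) '' X ∈ 𝕏) : 𝕏 ≃ₜ 𝕏 :=
  (imageHomeomorph (A.toEquiv.trans (Equiv.addLeft t))).subtype h

lemma isExtendedSymmetry_translateImageHomeomorph (A : G ≃+ G) (t : G)
    (h : ∀ X, X ∈ 𝕏 ↔ (fun x => t + A x) '' X ∈ 𝕏) :
    IsExtendedSymmetry A (translateImageHomeomorph A t h) := by
  intro s X Y hXY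
  change (fun x => t + A x) '' (Y : Set G) = (A s + ·) '' ((fun x => t + A x) '' (X : Set G))
  rw [hXY, Set.image_image, Set.image_image]
  simp only [map_add, add_left_comm]

end ExtendedSymmetry

/-- `X` misses a residue class modulo `I`: the local condition defining `𝕏_{K,k}`. The missed class
is given by a representative `c`. -/
def MissesClass {R : Type*} [CommRing R] (I : Ideal R) (X : Set R) : Prop :=
  ∃ c, ∀ y ∈ X, y - c ∉ I

namespace MissesClass

variable {R : Type*} [CommRing R] {I : Ideal R} {X Y : Set R}

lemma of_congr (hX : MissesClass I X) (h : ∀ y ∈ Y, ∃ x ∈ X, y - x ∈ I) : MissesClass I Y := by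
  obtain ⟨c, hc⟩ := hX
  refine ⟨c, fun y hy hyc => ?_⟩
  obtain ⟨x, hx, hyx⟩ := h y hy
  exact hc x hx (by simpa using I.sub_mem hyc hyx)

lemma of_forall_sub_mem (hI : I ≠ ⊤) {a : R} (h : ∀ x ∈ X, x - a ∈ I) : MissesClass I X := by
  refine ⟨a - 1, fun x hx hmem => (I.ne_top_iff_one.1 hI) ?_⟩
  simpa using I.sub_mem hmem (h x hx)

lemma of_ncard_lt (hX : X.Finite) (h : X.ncard < Nat.card (R ⧸ I)) : MissesClass I X := by
  by_contra! hhit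
  simp only [MissesClass, not_exists, not_forall, not_not] at hhit
  have := hX.to_subtype
  refine h.not_ge (Nat.card_le_card_of_surjective (fun y : X => Ideal.Quotient.mk I y) fun q => ?_)
  obtain ⟨c, rfl⟩ := Ideal.Quotient.mk_surjective q
  obtain ⟨y, hy, hyc⟩ := hhit c
  exact ⟨⟨y, hy⟩, Ideal.Quotient.eq.2 hyc⟩

end MissesClass

section AdmissibleSets

variable {K : Type*} [Field K] [NumberField K] {k : ℕ}

lemma isLowerSet_admissibleSets : IsLowerSet (admissibleSets K k) :=
  fun _ _ hYX hX P hP hP0 => (hX P hP hP0).imp fun _ hc y hy => hc y (hYX hy)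

lemma image_add_mul_mem_admissibleSets (σ : 𝓞 K ≃+* 𝓞 K) (ε : (𝓞 K)ˣ) (t : 𝓞 K) {X : Set (𝓞 K)}
    (hX : X ∈ admissibleSets K k) : (fun x => t + ε * σ x) '' X ∈ admissibleSets K k := by
  intro P hP hP0
  have hmap : P.comap σ = P.map σ.symm := (Ideal.map_symm σ).symm
  obtain ⟨c, hc⟩ := hX (P.comap σ) (hP.comap σ) (by
    rwa [hmap, ne_eq, Ideal.map_eq_bot_iff_of_injective σ.symm.injective])
  refine ⟨t + ε * σ c, ?_⟩
  rintro _ ⟨x, hx, rfl⟩ hmem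
  refine hc x hx ?_
  rw [add_sub_add_left_eq_sub, ← mul_sub, Ideal.unit_mul_mem_iff_mem _ ε.isUnit, ← map_sub] at hmem
  rw [hmap, ← Ideal.map_pow, Ideal.map_symm]
  exact hmem

lemma isTranslationInvariant_admissibleSets : IsTranslationInvariant (admissibleSets K k) :=
  fun t X hX => by simpa using image_add_mul_mem_admissibleSets (RingEquiv.refl _) 1 t hX

lemma mem_admissibleSets_of_image_add_mem {t : 𝓞 K} {X : Set (𝓞 K)}
    (h : (t + ·) '' X ∈ admissibleSets K k) : X ∈ admissibleSets K k := by
  have := isTranslationInvariant_admissibleSets (-t) _ h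
  rw [Set.image_image] at this
  simpa only [neg_add_cancel_left, Set.image_id'] using this

lemma pow_ne_top_of_isPrime {R : Type*} [CommRing R] {P : Ideal R} (hP : P.IsPrime) (hk : k ≠ 0) :
    P ^ k ≠ ⊤ :=
  fun h => hP.ne_top (top_le_iff.1 (h ▸ Ideal.pow_le_self hk))

lemma singleton_mem_admissibleSets (hk : k ≠ 0) (a : 𝓞 K) : {a} ∈ admissibleSets K k :=
  fun _ hP _ => MissesClass.of_forall_sub_mem (pow_ne_top_of_isPrime hP hk) (a := a) (by simp)

lemma mem_admissibleSets_of_finite {X : Set (𝓞 K)} (hX : X.Finite)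
    (h : ∀ P : Ideal (𝓞 K), P.IsPrime → P ≠ ⊥ → Ideal.absNorm P ^ k ≤ X.ncard →
      MissesClass (P ^ k) X) :
    X ∈ admissibleSets K k := by
  intro P hP hP0
  by_cases hle : Ideal.absNorm P ^ k ≤ X.ncard
  · exact h P hP hP0 hle
  · rw [← map_pow, not_le] at hle
    exact MissesClass.of_ncard_lt hX hle

lemma natCast_factorial_pow_mem_pow {P : Ideal (𝓞 K)} (hP : P ≠ ⊥) {B : ℕ}
    (hB : Ideal.absNorm P ≤ B) : ((B.factorial ^ k : ℕ) : 𝓞 K) ∈ P ^ k := by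
  rw [Nat.cast_pow]
  refine Ideal.pow_mem_pow (P.mem_of_dvd (Nat.cast_dvd_cast ?_) (Ideal.absNorm_mem P)) k
  exact Nat.dvd_factorial (Nat.pos_of_ne_zero (Ideal.absNorm_eq_zero_iff.not.2 hP)) hB

lemma infinite_setOf_sub_mem {R : Type*} [CommRing R] [IsDomain R] [CharZero R] {J : Ideal R}
    (hJ : J ≠ ⊥) (c : R) : {x | x - c ∈ J}.Infinite := by
  obtain ⟨z, hz, hz0⟩ := Submodule.exists_mem_ne_zero_of_ne_bot hJ
  refine Set.infinite_of_injective_forall_mem (f := fun n : ℕ => c + (n : R) * z) ?_ ?_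
  · intro m n h
    simpa [hz0] using h
  · intro n
    simpa using J.mul_mem_left _ hz

lemma exists_forall_sub_mem_pow (k B : ℕ) (b : Ideal (𝓞 K) → 𝓞 K) :
    ∃ y : 𝓞 K, ∀ P : Ideal (𝓞 K), P.IsPrime → P ≠ ⊥ → Ideal.absNorm P ≤ B → y - b P ∈ P ^ k := by
  have hfin : {P : Ideal (𝓞 K) | P.IsPrime ∧ P ≠ ⊥ ∧ Ideal.absNorm P ≤ B}.Finite :=
    (Ideal.finite_setOfPred_absNorm_le B).subset fun P hP => hP.2.2
  obtain ⟨y, hy⟩ := IsDedekindDomain.exists_forall_sub_mem_ideal (s := hfin.toFinset) id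
    (fun _ => k) (fun P hP => Ideal.prime_of_isPrime (hfin.mem_toFinset.1 hP).2.1
      (hfin.mem_toFinset.1 hP).1) (fun P _ Q _ hPQ => hPQ) fun P => b P
  exact ⟨y, fun P hP hP0 hB => hy P (hfin.mem_toFinset.2 ⟨hP, hP0, hB⟩)⟩

end AdmissibleSets

section AbsNorm

variable {S : Type*} [CommRing S] [IsDedekindDomain S] [Module.Free ℤ S]

lemma ne_bot_of_prime_absNorm {P : Ideal S} (hP : (Ideal.absNorm P).Prime) : P ≠ ⊥ :=
  fun h => hP.ne_zero (h ▸ Ideal.absNorm_bot)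

lemma natCast_quotient_eq_of_modEq {I : Ideal S} {m n : ℕ}
    (h : m ≡ n [MOD Ideal.absNorm I]) : (m : S ⧸ I) = n := by
  obtain ⟨c, hc⟩ := h.symm.dvd
  have hcast : (m - n : S) = Ideal.absNorm I * c := by
    simpa using congrArg (Int.cast (R := S)) hc
  exact Ideal.Quotient.eq.2 (hcast ▸ I.mul_mem_right _ (Ideal.absNorm_mem I))

lemma exists_intCast_sub_mem {P : Ideal S} (hP : (Ideal.absNorm P).Prime) (x : S) :
    ∃ a : ℤ, x - a ∈ P := by
  have : Fact (Ideal.absNorm P).Prime := ⟨hP⟩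
  have hcard : Nat.card (S ⧸ P) = Ideal.absNorm P := by
    rw [Ideal.absNorm_apply, Submodule.cardQuot_apply]
  have hone : Ideal.Quotient.mk P 1 ≠ 0 := fun h =>
    (Ideal.isPrime_of_irreducible_absNorm hP).one_notMem (Ideal.Quotient.eq_zero_iff_mem.1 h)
  obtain ⟨a, ha⟩ := mem_zmultiples_of_prime_card hcard hone (g' := Ideal.Quotient.mk P x)
  exact ⟨a, Ideal.Quotient.eq.1 (by simpa using ha.symm)⟩

end AbsNorm

section DegreeOnePrimes

lemma prime_natCard_of_bot_eq_top {F : Type*} [Field F] [Finite F] (h : (⊥ : Subfield F) = ⊤) :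
    (Nat.card F).Prime := by
  obtain ⟨p, hchar⟩ := CharP.exists F
  have hp : p.Prime :=
    (CharP.char_is_prime_or_zero F p).resolve_right (CharP.char_ne_zero_of_finite F p)
  have : Fact p.Prime := ⟨hp⟩
  let : Algebra (ZMod p) F := ZMod.algebra F p
  have hbij : Function.Bijective (algebraMap (ZMod p) F) := by
    refine ⟨(algebraMap (ZMod p) F).injective, RingHom.fieldRange_eq_top_iff.1 ?_⟩
    rw [← Subfield.bot_eq_of_zMod_algebra p, h]
  rwa [← Nat.card_congr (Equiv.ofBijective _ hbij), Nat.card_zmod]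

variable {K : Type*} [Field K] [NumberField K]

open IntermediateField in
lemma exists_ne_zero_adjoin_eq_top (K : Type*) [Field K] [NumberField K] :
    ∃ b : 𝓞 K, b ≠ 0 ∧ ℚ⟮(b : K)⟯ = ⊤ := by
  obtain ⟨a, ha⟩ := Field.exists_primitive_element ℚ K
  obtain ⟨n, hn0, hn⟩ := ((IsFractionRing.isAlgebraic_iff ℤ ℚ K).2
    (Algebra.IsAlgebraic.isAlgebraic (R := ℚ) a)).exists_integral_multiple
  have hna : ℚ⟮n • a⟯ = ⊤ := by
    rw [eq_top_iff, ← ha, adjoin_simple_le_iff]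
    have hmem := ℚ⟮n • a⟯.smul_mem (mem_adjoin_simple_self ℚ (n • a)) (x := (n : ℚ)⁻¹)
    rwa [← Int.cast_smul_eq_zsmul ℚ n a, inv_smul_smul₀ (Int.cast_ne_zero.2 hn0),
      Int.cast_smul_eq_zsmul] at hmem
  by_cases hzero : n • a = 0
  · have hbot : (⊥ : IntermediateField ℚ K) = ⊤ := by rw [← hna, hzero, adjoin_zero]
    exact ⟨1, one_ne_zero, by simp [hbot]⟩
  · exact ⟨⟨n • a, hn⟩, fun h => hzero (congrArg Subtype.val h), hna⟩

open IntermediateField in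
lemma exists_intCast_mul_mem_adjoin {b : 𝓞 K} (hb : ℚ⟮(b : K)⟯ = ⊤) :
    ∃ D : ℤ, D ≠ 0 ∧ ∀ y : 𝓞 K, (D : 𝓞 K) * y ∈ Algebra.adjoin ℤ {b} := by
  have hint : IsIntegral ℚ (b : K) := Algebra.IsIntegral.isIntegral _
  let B := PowerBasis.ofAdjoinEqTop hint
    ((adjoin_simple_eq_top_iff_of_isAlgebraic hint.isAlgebraic).1 hb)
  have hgen : B.gen = (b : K) := PowerBasis.ofAdjoinEqTop_gen _ _
  have hgenint : IsIntegral ℤ B.gen := hgen ▸ b.isIntegral_coe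
  obtain ⟨D, hD⟩ : ∃ D : ℤ, (D : ℚ) = Algebra.discr ℚ B.basis :=
    IsIntegrallyClosed.isIntegral_iff.1 <| Algebra.discr_isIntegral ℚ fun i => by
      rw [B.basis_eq_pow]
      exact hgenint.pow _
  have hD0 : D ≠ 0 := by
    rw [← Int.cast_ne_zero (α := ℚ), hD]
    exact Algebra.discr_not_zero_of_basis ℚ B.basis
  refine ⟨D, hD0, fun y => ?_⟩
  have hmem := Algebra.discr_mul_isIntegral_mem_adjoin ℚ (R := ℤ) hgenint y.isIntegral_coe
  have hmap : Algebra.adjoin ℤ {B.gen} =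
      (Algebra.adjoin ℤ {b}).map (IsScalarTower.toAlgHom ℤ (𝓞 K) K) := by
    rw [AlgHom.map_adjoin_singleton, hgen]
    rfl
  rw [hmap, ← hD] at hmem
  obtain ⟨x, hx, hxy⟩ := hmem
  have hxD : x = D * y := RingOfIntegers.ext (by simpa [Int.cast_smul_eq_zsmul] using hxy)
  exact hxD ▸ hx

lemma not_isUnit_of_forall_one_lt {u : 𝓞 K} (hu : ∀ w : InfinitePlace K, 1 < w (u : K)) :
    ¬ IsUnit u := by
  rintro ⟨u, rfl⟩
  have hlt : ∀ w : InfinitePlace K, w ((u⁻¹ : (𝓞 K)ˣ) : K) < 1 := fun w => by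
    have hinv : w (u : K) * w ((u⁻¹ : (𝓞 K)ˣ) : K) = 1 := by
      rw [← map_mul, ← map_mul, Units.mul_inv, map_one, map_one]
    have := hu w
    nlinarith
  let w : InfinitePlace K := Classical.arbitrary _
  exact (hlt w).not_ge (InfinitePlace.one_le_of_lt_one (u⁻¹).ne_zero fun z _ => hlt z)

lemma exists_not_isUnit_one_sub_natCast_mul {z : 𝓞 K} (hz : z ≠ 0) :
    ∃ n : ℕ, ¬ IsUnit (1 - n * z) := by
  have hpos : ∀ w : InfinitePlace K, 0 < w (z : K) := fun w =>
    InfinitePlace.pos_iff.2 (RingOfIntegers.coe_ne_zero_iff.2 hz)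
  choose n hn using fun w : InfinitePlace K => exists_nat_gt (2 / w (z : K))
  refine ⟨∑ w, n w, not_isUnit_of_forall_one_lt fun w => ?_⟩
  set m : ℕ := ∑ w, n w
  have hm : 2 < w (m * z : K) := by
    have hle : (n w : ℝ) ≤ m :=
      Nat.cast_le.2 (Finset.single_le_sum (f := n) (fun _ _ => Nat.zero_le _) (Finset.mem_univ w))
    rw [map_mul, InfinitePlace.map_natCast, ← div_lt_iff₀ (hpos w)]
    exact (hn w).trans_le hle
  have hcoe : ((1 - m * z : 𝓞 K) : K) = 1 - m * z := by simp
  calc (1 : ℝ) < w (m * z : K) - w 1 := by rw [map_one]; linarith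
    _ ≤ w (m * z - 1 : K) := w.1.le_sub _ _
    _ = w ((1 - m * z : 𝓞 K) : K) := by rw [hcoe]; exact w.1.map_sub _ _

lemma prime_natCard_quotient_of_one_sub_mul_mem {R : Type*} [CommRing R] {Q : Ideal R}
    [Q.IsMaximal] [Finite (R ⧸ Q)] {b : R} {D m : ℤ} (hD : ∀ y, (D : R) * y ∈ Algebra.adjoin ℤ {b})
    (hDQ : (D : R) ∉ Q) (hb : 1 - m * b ∈ Q) : (Nat.card (R ⧸ Q)).Prime := by
  let := Ideal.Quotient.field Q
  let π := Ideal.Quotient.mk Q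
  let F := (⊥ : Subfield (R ⧸ Q))
  have hbF : π b ∈ F := by
    have hinv : m * π b = 1 := by
      have h := Ideal.Quotient.eq_zero_iff_mem.2 hb
      rw [map_sub, map_one, sub_eq_zero] at h
      simpa [π] using h.symm
    rw [eq_inv_of_mul_eq_one_right hinv]
    exact F.inv_mem (intCast_mem F m)
  have hadjoin : ∀ x ∈ Algebra.adjoin ℤ {b}, π x ∈ F := fun x hx =>
    Algebra.adjoin_le (S := subalgebraOfSubring (F.toSubring.comap π)) (by simpa using hbF) hx
  refine prime_natCard_of_bot_eq_top (eq_top_iff.2 fun y _ => ?_)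
  obtain ⟨y, rfl⟩ := Ideal.Quotient.mk_surjective y
  have hDπ : (D : R ⧸ Q) ≠ 0 := fun h => hDQ (Ideal.Quotient.eq_zero_iff_mem.1 (by simpa using h))
  have hy : D * π y ∈ F := by simpa [π] using hadjoin _ (hD y)
  simpa [hDπ] using F.mul_mem (F.inv_mem (intCast_mem F D)) hy

/- A prime `Q` containing `1 - n N D b`, where `D 𝓞 K ⊆ ℤ[b]` and `N` is the norm of `(z)`, avoids
`N` and `D`, and modulo `Q` the generator `b` is the inverse of an integer. -/
lemma exists_absNorm_prime_notMem {z : 𝓞 K} (hz : z ≠ 0) :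
    ∃ Q : Ideal (𝓞 K), (Ideal.absNorm Q).Prime ∧ z ∉ Q := by
  obtain ⟨b, hb0, hb⟩ := exists_ne_zero_adjoin_eq_top K
  obtain ⟨D, hD0, hD⟩ := exists_intCast_mul_mem_adjoin hb
  let N := Ideal.absNorm (Ideal.span {z})
  have hN0 : N ≠ 0 := by simpa [N, Ideal.absNorm_eq_zero_iff] using hz
  have hzN : z ∣ (N : 𝓞 K) := Ideal.mem_span_singleton.1 (Ideal.absNorm_mem _)
  obtain ⟨n, hn⟩ := exists_not_isUnit_one_sub_natCast_mul
    (mul_ne_zero (mul_ne_zero (Nat.cast_ne_zero.2 hN0) (Int.cast_ne_zero.2 hD0)) hb0)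
  obtain ⟨Q, hQ, hmem⟩ := exists_max_ideal_of_mem_nonunits hn
  have hnot : ∀ c : 𝓞 K, c ∣ N * D * b → c ∉ Q := fun c hc hcQ =>
    Q.ne_top_iff_one.1 hQ.ne_top
      (by simpa using Q.add_mem hmem (Q.mul_mem_left n (Q.mem_of_dvd hc hcQ)))
  have hQ0 : Q ≠ ⊥ := Ring.ne_bot_of_isMaximal_of_not_isField hQ (RingOfIntegers.not_isField K)
  have : Finite (𝓞 K ⧸ Q) := Ideal.finiteQuotientOfFreeOfNeBot Q hQ0
  refine ⟨Q, ?_, hnot z ((hzN.mul_right _).mul_right _)⟩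
  rw [Ideal.absNorm_apply, Submodule.cardQuot_apply]
  exact prime_natCard_quotient_of_one_sub_mul_mem hD (hnot D ((dvd_mul_left _ _).mul_right b))
    (m := n * (N * D)) (by simpa [mul_assoc] using hmem)

end DegreeOnePrimes

section AdmissibleExtendedSymmetry

variable {K : Type*} [Field K] [NumberField K] {k : ℕ} {A : 𝓞 K ≃+ 𝓞 K}
  {f : admissibleSets K k ≃ₜ admissibleSets K k}

lemma exists_isPrime_forall_sub_notMem {S : Set (𝓞 K)} (hS : S.Finite) {s : 𝓞 K} (hs : s ∉ S) :
    ∃ P : Ideal (𝓞 K), P.IsPrime ∧ P ≠ ⊥ ∧ ∀ x ∈ S, s - x ∉ P := by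
  have hz : ∏ x ∈ hS.toFinset, (s - x) ≠ 0 := Finset.prod_ne_zero_iff.2 fun x hx =>
    sub_ne_zero.2 fun h => hs (h ▸ hS.mem_toFinset.1 hx)
  obtain ⟨P, hP, hzP⟩ := exists_absNorm_prime_notMem hz
  exact ⟨P, Ideal.isPrime_of_irreducible_absNorm hP, ne_bot_of_prime_absNorm hP, fun x hx hxP =>
    hzP (P.mem_of_dvd (Finset.dvd_prod_of_mem _ (hS.mem_toFinset.2 hx)) hxP)⟩

lemma exists_mk_eq_forall_sub_mem_pow {P : Ideal (𝓞 K)} (hP : P.IsPrime) (hP0 : P ≠ ⊥) {B : ℕ}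
    (hPB : Ideal.absNorm P ≤ B) (b : Ideal (𝓞 K) → 𝓞 K) (q : 𝓞 K ⧸ P ^ k) :
    ∃ y : 𝓞 K, Ideal.Quotient.mk (P ^ k) y = q ∧ ∀ Q : Ideal (𝓞 K), Q.IsPrime → Q ≠ ⊥ → Q ≠ P →
      Ideal.absNorm Q ≤ B → y - b Q ∈ Q ^ k := by
  classical
  obtain ⟨y, hy⟩ := exists_forall_sub_mem_pow k B (Function.update b P q.out)
  refine ⟨y, ?_, fun Q hQ hQ0 hQP hQB => ?_⟩
  · have h := hy P hP hP0 hPB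
    rw [Function.update_self] at h
    exact (Ideal.Quotient.eq.2 h).trans q.out_eq
  · have h := hy Q hQ hQ0 hQB
    rwa [Function.update_of_ne hQP] at h

/- If `s` differs from every point of `S` modulo `P`, then `S` together with one representative of
each class modulo `P ^ k` other than that of `s` misses only the class of `s`. -/
lemma exists_union_mem_insert_notMem (hk : k ≠ 0) {S : Set (𝓞 K)} (hS : S.Finite)
    (hSadm : S ∈ admissibleSets K k) {s : 𝓞 K} (hs : s ∉ S) :
    ∃ T : Set (𝓞 K), T.Finite ∧ S ∪ T ∈ admissibleSets K k ∧ insert s T ∉ admissibleSets K k := by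
  obtain ⟨P, hP, hP0, hsP⟩ := exists_isPrime_forall_sub_notMem hS hs
  have := Ideal.finiteQuotientOfFreeOfNeBot (P ^ k) (pow_ne_zero k hP0)
  let B := S.ncard + Nat.card (𝓞 K ⧸ P ^ k)
  have hPB : Ideal.absNorm P ≤ B := (Nat.le_self_pow hk _).trans <| by
    rw [← map_pow]; exact Nat.le_add_left _ _
  choose! c hc using hSadm
  choose y hyP hyc using exists_mk_eq_forall_sub_mem_pow (k := k) hP hP0 hPB fun Q => c Q + 1
  let T := y '' {q | q ≠ Ideal.Quotient.mk (P ^ k) s}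
  refine ⟨T, Set.toFinite T, ?_, fun hins => ?_⟩
  · refine mem_admissibleSets_of_finite (hS.union (Set.toFinite T)) fun Q hQ hQ0 hle => ?_
    have hQB : Ideal.absNorm Q ≤ B := (Nat.le_self_pow hk _).trans <| hle.trans <|
      (Set.ncard_union_le _ _).trans <| Nat.add_le_add_left
        ((Set.ncard_image_le (Set.toFinite _)).trans (Set.ncard_le_card _)) _
    by_cases hQP : Q = P
    · subst hQP
      refine ⟨s, ?_⟩
      rintro _ (hx | ⟨q, hq, rfl⟩) hmem
      · exact hsP _ hx (sub_mem_comm_iff.1 (Ideal.pow_le_self hk hmem))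
      · exact hq ((hyP q).symm.trans (Ideal.Quotient.eq.2 hmem))
    · refine ⟨c Q, ?_⟩
      rintro _ (hx | ⟨q, -, rfl⟩) hmem
      · exact hc Q hQ hQ0 _ hx hmem
      · exact (Ideal.ne_top_iff_one _).1 (pow_ne_top_of_isPrime hQ hk)
          (by simpa using (Q ^ k).sub_mem hmem (hyc q Q hQ hQ0 hQP hQB))
  · obtain ⟨a, ha⟩ := hins P hP hP0
    by_cases has : Ideal.Quotient.mk (P ^ k) a = Ideal.Quotient.mk (P ^ k) s
    · exact ha s (Set.mem_insert _ _) (Ideal.Quotient.eq.1 has.symm)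
    · exact ha _ (Or.inr ⟨_, has, rfl⟩) (Ideal.Quotient.eq.1 (hyP _))

lemma union_range_mem_admissibleSets (hk : k ≠ 0) {S T : Set (𝓞 K)} (hS : S.Finite) (hT : T.Finite)
    (hST : S ∪ T ∈ admissibleSets K k) {B : ℕ} (hB : S.ncard + T.ncard ≤ B) {t : T → 𝓞 K}
    (ht : ∀ x, t x - x ∈ Ideal.span {((B.factorial ^ k : ℕ) : 𝓞 K)}) :
    S ∪ Set.range t ∈ admissibleSets K k := by
  have := hT.to_subtype
  have hrange : (Set.range t).ncard ≤ T.ncard := by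
    rw [← Set.image_univ, ← Nat.card_coe_set_eq T, ← Set.ncard_univ]
    exact Set.ncard_image_le Set.finite_univ
  refine mem_admissibleSets_of_finite (hS.union (Set.finite_range t)) fun P hP hP0 hle => ?_
  have hPB : Ideal.absNorm P ≤ B := calc
    Ideal.absNorm P ≤ Ideal.absNorm P ^ k := Nat.le_self_pow hk _
    _ ≤ (S ∪ Set.range t).ncard := hle
    _ ≤ S.ncard + (Set.range t).ncard := Set.ncard_union_le _ _
    _ ≤ B := (Nat.add_le_add_left hrange _).trans hB
  refine MissesClass.of_congr (hST P hP hP0) ?_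
  rintro _ (hx | ⟨x, rfl⟩)
  · exact ⟨_, Or.inl hx, by simp⟩
  · exact ⟨x, Or.inr x.2, (Ideal.span_singleton_le_iff_mem _).2
      (natCast_factorial_pow_mem_pow hP0 hPB) (ht x)⟩

namespace IsExtendedSymmetry

lemma insert_image_mem_admissibleSets (hk : k ≠ 0) (hf : IsExtendedSymmetry A f) {d : 𝓞 K}
    (hd : d ∈ (f ⟨{0}, singleton_mem_admissibleSets hk 0⟩ : Set (𝓞 K)))
    {S : admissibleSets K k} (hS : (S : Set (𝓞 K)).Finite) {y : 𝓞 K} (hy : y ∈ (f S : Set (𝓞 K)))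
    {T : Set (𝓞 K)} (hT : T.Finite) (hST : (S : Set (𝓞 K)) ∪ T ∈ admissibleSets K k) :
    insert y ((fun x => d + A x) '' T) ∈ admissibleSets K k := by
  intro Q hQ hQ0
  have := hT.to_subtype
  let B := (S : Set (𝓞 K)).ncard + T.ncard + Ideal.absNorm Q
  let n := B.factorial ^ k
  have hn : Ideal.span {(n : 𝓞 K)} ≠ ⊥ := by simp [n, Nat.factorial_ne_zero]
  obtain ⟨t, ht, htadm⟩ := hf.exists_insert_range_mem isTranslationInvariant_admissibleSets
    isLowerSet_admissibleSets hd hS hy fun x : T => infinite_setOf_sub_mem hn (x : 𝓞 K)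
  have hadm := htadm (union_range_mem_admissibleSets hk hS hT hST (Nat.le_add_right _ _) ht)
  refine MissesClass.of_congr (hadm Q hQ hQ0) ?_
  rintro _ (rfl | ⟨x, hx, rfl⟩)
  · exact ⟨_, Set.mem_insert _ _, by simp⟩
  · refine ⟨_, Or.inr ⟨⟨x, hx⟩, rfl⟩, ?_⟩
    obtain ⟨z, hz⟩ := Ideal.mem_span_singleton.1 (ht ⟨x, hx⟩)
    have hA : d + A x - (d + A (t ⟨x, hx⟩)) = -(n * A z) := by
      rw [add_sub_add_left_eq_sub, ← neg_sub, ← map_sub, hz, ← nsmul_eq_mul, map_nsmul,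
        nsmul_eq_mul]
    rw [hA]
    exact neg_mem (Ideal.mul_mem_right _ _
      (natCast_factorial_pow_mem_pow hQ0 (Nat.le_add_left _ _)))

lemma exists_mem_apply_singleton_zero (hk : k ≠ 0) (hf : IsExtendedSymmetry A f) :
    ∃ d, d ∈ (f ⟨{0}, singleton_mem_admissibleSets hk 0⟩ : Set (𝓞 K)) :=
  hf.nonempty_apply_singleton_zero isTranslationInvariant_admissibleSets _

lemma image_mem_admissibleSets (hk : k ≠ 0) (hf : IsExtendedSymmetry A f) {T : Set (𝓞 K)}
    (hT : T.Finite) (hTadm : T ∈ admissibleSets K k) : A '' T ∈ admissibleSets K k := by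
  obtain rfl | ⟨a, ha⟩ := T.eq_empty_or_nonempty
  · rwa [Set.image_empty]
  obtain ⟨d, hd⟩ := hf.exists_mem_apply_singleton_zero hk
  let S : admissibleSets K k := ⟨{a}, singleton_mem_admissibleSets hk a⟩
  have hy : A a + d ∈ (f S : Set (𝓞 K)) := by
    rw [hf a ⟨{0}, singleton_mem_admissibleSets hk 0⟩ S (by simp [S])]
    exact Set.mem_image_of_mem _ hd
  have h := hf.insert_image_mem_admissibleSets hk hd (S := S) (Set.finite_singleton a) hy hT
    (by rwa [Set.singleton_union, Set.insert_eq_of_mem ha])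
  refine mem_admissibleSets_of_image_add_mem (t := d) ?_
  rw [Set.image_image]
  exact isLowerSet_admissibleSets (Set.subset_insert _ _) h

lemma mem_of_add_apply_mem_of_finite (hk : k ≠ 0) (hf : IsExtendedSymmetry A f) {d : 𝓞 K}
    (hd : d ∈ (f ⟨{0}, singleton_mem_admissibleSets hk 0⟩ : Set (𝓞 K)))
    {S : admissibleSets K k} (hS : (S : Set (𝓞 K)).Finite) {s : 𝓞 K}
    (hs : d + A s ∈ (f S : Set (𝓞 K))) : s ∈ (S : Set (𝓞 K)) := by
  by_contra hsS
  obtain ⟨T, hT, hST, hsT⟩ := exists_union_mem_insert_notMem hk hS S.2 hsS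
  have h := hf.insert_image_mem_admissibleSets hk hd hS hs hT hST
  have hA : A '' insert s T ∈ admissibleSets K k := by
    refine mem_admissibleSets_of_image_add_mem (t := d) ?_
    rwa [Set.image_image, Set.image_insert_eq]
  have := (hf.symm isTranslationInvariant_admissibleSets).image_mem_admissibleSets hk
    ((hT.insert s).image A) hA
  rw [Set.image_image] at this
  exact hsT (by simpa using this)

lemma exists_forall_apply_eq_image (hk : k ≠ 0) (hf : IsExtendedSymmetry A f) :
    ∃ d, ∀ X, (f X : Set (𝓞 K)) = (fun x => d + A x) '' (X : Set (𝓞 K)) := by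
  have hf' := hf.symm isTranslationInvariant_admissibleSets
  obtain ⟨d, hd⟩ := hf.exists_mem_apply_singleton_zero hk
  obtain ⟨e, he⟩ := hf'.exists_mem_apply_singleton_zero hk
  exact ⟨d, apply_eq_image_of_add_apply_mem (f := f.toEquiv) (singleton_mem_admissibleSets hk 0)
    (fun _ _ => mem_of_forall_finite_mem isLowerSet_admissibleSets
      (continuous_subtype_val.comp f.continuous)
      fun _ hS => hf.mem_of_add_apply_mem_of_finite hk hd hS)
    (fun _ _ => mem_of_forall_finite_mem isLowerSet_admissibleSets
      (continuous_subtype_val.comp f.symm.continuous)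
      fun _ hS => hf'.mem_of_add_apply_mem_of_finite hk he hS)⟩

end IsExtendedSymmetry

end AdmissibleExtendedSymmetry

section SubgroupAvoidance

variable {G ι : Type*} [AddGroup G]

open scoped Pointwise in
lemma exists_mem_forall_add_notMem {s : Finset ι} {H : ι → AddSubgroup G} {L : AddSubgroup G}
    (h : ∀ i ∈ s, s.card < (H i).relIndex L) (a : G) : ∃ v ∈ L, ∀ i ∈ s, a + v ∉ H i := by
  by_contra! hcover
  have hcoset : ∀ i, ∃ g : L, ∀ v : L, a + v ∈ H i → v ∈ g +ᵥ ((H i).addSubgroupOf L : Set L) := by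
    intro i
    by_cases hne : ∃ g : L, a + g ∈ H i
    · obtain ⟨g, hg⟩ := hne
      refine ⟨g, fun v hv => Set.mem_vadd_set_iff_neg_vadd_mem.2 ?_⟩
      simpa [AddSubgroup.mem_addSubgroupOf, add_assoc] using (H i).add_mem ((H i).neg_mem hg) hv
    · exact ⟨0, fun v hv => (hne ⟨v, hv⟩).elim⟩
  choose g hg using hcoset
  have hunion : ⋃ i ∈ s, g i +ᵥ ((H i).addSubgroupOf L : Set L) = Set.univ := by
    refine Set.eq_univ_of_forall fun v => ?_
    obtain ⟨i, hi, hv⟩ := hcover v v.2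
    exact Set.mem_biUnion hi (hg i v hv)
  obtain ⟨i, hi, -, hle⟩ := AddSubgroup.exists_index_le_card_of_leftCoset_cover hunion
  exact (h i hi).not_ge hle

lemma le_relIndex_of_index_eq_prime_pow {p k : ℕ} (hp : p.Prime) {H L : AddSubgroup G}
    [H.Normal] (hH : H.index = p ^ k) (hL : ¬ L ≤ H) : p ≤ H.relIndex L := by
  obtain ⟨j, -, hj⟩ := (Nat.dvd_prime_pow hp).1 (hH ▸ H.relIndex_dvd_index_of_normal L)
  have hj0 : j ≠ 0 := by
    rintro rfl
    exact hL (AddSubgroup.relIndex_eq_one.1 (by simpa using hj))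
  exact hj ▸ Nat.le_self_pow hj0 p

lemma eq_of_le_of_index_eq {H L : AddSubgroup G} (hLH : L ≤ H) (hindex : L.index = H.index)
    (hH : H.index ≠ 0) : L = H := by
  have h := AddSubgroup.relIndex_mul_index hLH
  rw [hindex, Nat.mul_eq_right hH] at h
  exact le_antisymm hLH (AddSubgroup.relIndex_eq_one.1 h)

end SubgroupAvoidance

section DegreeOneCorrespondence

variable {K : Type*} [Field K] [NumberField K] {k : ℕ} {A : 𝓞 K ≃+ 𝓞 K}

lemma ncard_setOf_absNorm_eq_le {p : ℕ} (hp : p.Prime) :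
    {P : Ideal (𝓞 K) | Ideal.absNorm P = p}.ncard ≤ Module.finrank ℤ (𝓞 K) := by
  have hfin := Ideal.finite_setOfPred_absNorm_eq (S := 𝓞 K) p
  rw [Set.ncard_eq_toFinset_card _ hfin]
  have hnorm : ∀ P ∈ hfin.toFinset, Ideal.absNorm P = p := fun P hP => hfin.mem_toFinset.1 hP
  have hdvd : ∏ P ∈ hfin.toFinset, P ∣ Ideal.span {(p : 𝓞 K)} := by
    refine Finset.prod_primes_dvd _ (fun P hP => ?_) (fun P hP => ?_)
    · have hPp : (Ideal.absNorm P).Prime := hnorm P hP ▸ hp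
      exact Ideal.prime_of_isPrime (ne_bot_of_prime_absNorm hPp)
        (Ideal.isPrime_of_irreducible_absNorm hPp)
    · rw [Ideal.dvd_span_singleton, ← hnorm P hP]
      exact Ideal.absNorm_mem P
  have h := Ideal.absNorm_dvd_absNorm_of_le (Ideal.le_of_dvd hdvd)
  rw [Ideal.absNorm_span_natCast, map_prod, Finset.prod_congr rfl hnorm, Finset.prod_const] at h
  exact (Nat.pow_dvd_pow_iff_le_right hp.one_lt).1 h

lemma exists_sub_mem_forall_notMem_pow {p : ℕ} (hp : p.Prime)
    (hrank : Module.finrank ℤ (𝓞 K) < p) {L : AddSubgroup (𝓞 K)} (hL : L.index = p ^ k)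
    (hne : ∀ P : Ideal (𝓞 K), Ideal.absNorm P = p → L ≠ (P ^ k).toAddSubgroup) (a : 𝓞 K) :
    ∃ b, b - a ∈ L ∧ ∀ P : Ideal (𝓞 K), Ideal.absNorm P = p → b ∉ P ^ k := by
  have hfin := Ideal.finite_setOfPred_absNorm_eq (S := 𝓞 K) p
  have hcard : hfin.toFinset.card < p := by
    rw [← Set.ncard_eq_toFinset_card _ hfin]
    exact (ncard_setOf_absNorm_eq_le hp).trans_lt hrank
  have hrel : ∀ P ∈ hfin.toFinset, hfin.toFinset.card < (P ^ k).toAddSubgroup.relIndex L := by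
    intro P hP
    have hPp : Ideal.absNorm P = p := hfin.mem_toFinset.1 hP
    have hindex : (P ^ k).toAddSubgroup.index = p ^ k := by
      rw [← Ideal.absNorm_eq_index, map_pow, hPp]
    refine hcard.trans_le (le_relIndex_of_index_eq_prime_pow hp hindex fun hLP => hne P hPp ?_)
    exact eq_of_le_of_index_eq hLP (hL.trans hindex.symm) (hindex ▸ pow_ne_zero k hp.ne_zero)
  obtain ⟨v, hv, hav⟩ := exists_mem_forall_add_notMem hrel a
  exact ⟨a + v, by simpa using hv, fun P hP => hav P (hfin.mem_toFinset.2 hP)⟩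

lemma exists_natCast_mul_image_mem_admissibleSets (hk : k ≠ 0) {p : ℕ} (hp : p.Prime)
    {T : Set (𝓞 K)} (hT : T.Finite) (hcard : T.ncard ≤ p ^ k)
    (hTp : ∀ P : Ideal (𝓞 K), Ideal.absNorm P = p → ∀ x ∈ T, x ∉ P ^ k) :
    ∃ n : ℕ, n ≡ 1 [MOD p ^ k] ∧ ((n : 𝓞 K) * ·) '' T ∈ admissibleSets K k := by
  have hcop : Nat.Coprime (p ^ k) ((p - 1).factorial ^ k) :=
    (hp.coprime_factorial_of_lt (Nat.sub_one_lt hp.ne_zero)).pow k k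
  obtain ⟨n, hn1, hn0⟩ := Nat.chineseRemainder hcop 1 0
  refine ⟨n, hn1, mem_admissibleSets_of_finite (hT.image _) fun P hP hP0 hle => ?_⟩
  have hPp : Ideal.absNorm P ≤ p :=
    (Nat.pow_le_pow_iff_left hk).1 (hle.trans ((Set.ncard_image_le hT).trans hcard))
  obtain hPp | hPp := hPp.eq_or_lt
  · refine ⟨0, ?_⟩
    rintro _ ⟨x, hx, rfl⟩ hmem
    have hn : (n : 𝓞 K ⧸ P ^ k) = 1 := by
      simpa using natCast_quotient_eq_of_modEq (n := 1) (by rwa [map_pow, hPp])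
    refine hTp P hPp x hx (Ideal.Quotient.eq_zero_iff_mem.1 ?_)
    simpa [hn] using Ideal.Quotient.eq_zero_iff_mem.2 hmem
  · refine MissesClass.of_forall_sub_mem (pow_ne_top_of_isPrime hP hk) (a := 0) ?_
    rintro _ ⟨x, -, rfl⟩
    rw [sub_zero]
    refine (P ^ k).mul_mem_right _ ((P ^ k).mem_of_dvd ?_
      (natCast_factorial_pow_mem_pow hP0 (Nat.le_sub_one_of_lt hPp)))
    exact Nat.cast_dvd_cast ((Nat.modEq_zero_iff_dvd).1 hn0)

/- Otherwise each class modulo the preimage of `Q ^ k` has a representative outside all the `P ^ k`.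
A multiple of this system of representatives is admissible, but its image under `A` meets every
class modulo `Q ^ k`. -/
lemma exists_absNorm_eq_forall_apply_mem_pow_iff (hk : k ≠ 0)
    (hA : ∀ T ∈ admissibleSets K k, T.Finite → A '' T ∈ admissibleSets K k)
    {Q : Ideal (𝓞 K)} (hQ : (Ideal.absNorm Q).Prime)
    (hrank : Module.finrank ℤ (𝓞 K) < Ideal.absNorm Q) :
    ∃ P : Ideal (𝓞 K), Ideal.absNorm P = Ideal.absNorm Q ∧ ∀ x, A x ∈ Q ^ k ↔ x ∈ P ^ k := by
  set p := Ideal.absNorm Q with hp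
  let L := (Q ^ k).toAddSubgroup.comap (A : 𝓞 K →+ 𝓞 K)
  have hL : L.index = p ^ k := by
    rw [AddSubgroup.index_comap_of_surjective _ A.surjective, ← Ideal.absNorm_eq_index, map_pow]
  by_contra! hcon
  have hne : ∀ P : Ideal (𝓞 K), Ideal.absNorm P = p → L ≠ (P ^ k).toAddSubgroup := fun P hP h => by
    obtain ⟨x, hx⟩ := hcon P hP
    have hiff : A x ∈ Q ^ k ↔ x ∈ P ^ k := SetLike.ext_iff.1 h x
    tauto
  choose b hbL hbP using exists_sub_mem_forall_notMem_pow hQ hrank hL hne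
  have := Ideal.finiteQuotientOfFreeOfNeBot (Q ^ k) (pow_ne_zero k (ne_bot_of_prime_absNorm hQ))
  let r : 𝓞 K ⧸ Q ^ k → 𝓞 K := fun q => b (A.symm q.out)
  have hr : ∀ q, A (r q) - q.out ∈ Q ^ k := fun q => by
    have h : A (b (A.symm q.out) - A.symm q.out) ∈ Q ^ k := hbL _
    rwa [map_sub, A.apply_symm_apply] at h
  have hcard : (Set.range r).ncard ≤ p ^ k := by
    rw [hp, ← map_pow, ← Set.image_univ]
    exact (Set.ncard_image_le Set.finite_univ).trans (Set.ncard_univ _).le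
  obtain ⟨n, hn, hadm⟩ := exists_natCast_mul_image_mem_admissibleSets hk hQ (Set.finite_range r)
    hcard (by rintro P hP _ ⟨q, rfl⟩; exact hbP _ P hP)
  obtain ⟨c, hc⟩ := hA _ hadm ((Set.finite_range r).image _) Q
    (Ideal.isPrime_of_irreducible_absNorm hQ) (ne_bot_of_prime_absNorm hQ)
  let q := Ideal.Quotient.mk (Q ^ k) c
  refine hc _ ⟨_, ⟨_, ⟨q, rfl⟩, rfl⟩, rfl⟩ (Ideal.Quotient.eq.1 ?_)
  have hn1 : (n : 𝓞 K ⧸ Q ^ k) = 1 := by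
    simpa using natCast_quotient_eq_of_modEq (n := 1) (by rwa [map_pow])
  change Ideal.Quotient.mk (Q ^ k) (A (n * r q)) = q
  rw [← nsmul_eq_mul, map_nsmul, map_nsmul, nsmul_eq_mul, hn1, one_mul]
  exact (Ideal.Quotient.eq.2 (hr q)).trans q.out_eq

end DegreeOneCorrespondence

section Multiplicativity

lemma absNorm_natCast_notMem_sq {K : Type*} [Field K] [NumberField K] {P : Ideal (𝓞 K)}
    (hP : (Ideal.absNorm P).Prime) (hdiscr : ¬ Ideal.absNorm P ∣ (discr K).natAbs) :
    (Ideal.absNorm P : 𝓞 K) ∉ P ^ 2 := by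
  intro hmem
  have : (Ideal.span {(Ideal.absNorm P : ℤ)}).IsMaximal :=
    PrincipalIdealRing.isMaximal_of_irreducible (Nat.prime_iff_prime_int.1 hP).irreducible
  have hdvd : P ^ (2 - 1) ∣ differentIdeal ℤ (𝓞 K) := by
    refine pow_sub_one_dvd_differentIdeal ℤ (p := Ideal.span {(Ideal.absNorm P : ℤ)}) P 2 ?_ ?_
    · simpa using hP.ne_zero
    · rw [Ideal.map_span, Set.image_singleton, Ideal.dvd_span_singleton]
      simpa using hmem
  rw [Nat.add_one_sub_one, pow_one] at hdvd
  have h := map_dvd (Ideal.absNorm (S := 𝓞 K)) hdvd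
  rw [NumberField.absNorm_differentIdeal K] at h
  exact hdiscr h

lemma le_pow_sup_span_singleton {R : Type*} [CommRing R] [IsDedekindDomain R] {P : Ideal R}
    (hP : P.IsPrime) (hP0 : P ≠ ⊥) {x : R} (hx : x ∉ P ^ 2) (k : ℕ) :
    P ≤ P ^ k ⊔ Ideal.span {x} := by
  have hdvd : P ^ k ⊔ Ideal.span {x} ∣ P ^ k := Ideal.dvd_iff_le.2 le_sup_left
  obtain ⟨j, -, hassoc⟩ := (dvd_prime_pow (Ideal.prime_of_isPrime hP0 hP) k).1 hdvd
  rw [associated_iff_eq] at hassoc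
  have hj : j < 2 := by
    by_contra! hj
    refine hx (Ideal.pow_le_pow_right hj ?_)
    rw [← hassoc]
    exact Ideal.mem_sup_right (Ideal.mem_span_singleton_self x)
  rw [hassoc]
  exact (pow_one P).symm.le.trans (Ideal.pow_le_pow_right (Nat.le_of_lt_succ hj))

lemma map_mul_mul_map_one_sub_mem {R S : Type*} [CommRing R] [CommRing S] {A : R →+ S}
    {P : Ideal R} {Q : Ideal S} (hA : ∀ x ∈ P, A x ∈ Q) (hP : ∀ x : R, ∃ a : ℤ, x - a ∈ P)
    (x y : R) : A (x * y) * A 1 - A x * A y ∈ Q := by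
  have hint : ∀ (x : R) (a : ℤ), x - a ∈ P →
      Ideal.Quotient.mk Q (A x) = a * Ideal.Quotient.mk Q (A 1) := by
    intro x a hx
    have h := Ideal.Quotient.eq_zero_iff_mem.2 (hA _ hx)
    rw [← mul_one (a : R), ← zsmul_eq_mul, map_sub, map_zsmul, map_sub, sub_eq_zero] at h
    simpa using h
  obtain ⟨a, ha⟩ := hP x
  obtain ⟨b, hb⟩ := hP y
  have hab : x * y - ((a * b : ℤ) : R) ∈ P := by
    have h := P.add_mem (P.mul_mem_right y ha) (P.mul_mem_left a hb)
    convert h using 1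
    push_cast
    ring
  refine Ideal.Quotient.eq.1 ?_
  rw [map_mul (Ideal.Quotient.mk Q), map_mul (Ideal.Quotient.mk Q), hint x a ha, hint y b hb,
    hint _ _ hab]
  push_cast
  ring

variable {K : Type*} [Field K] [NumberField K] {k : ℕ} {A : 𝓞 K ≃+ 𝓞 K}

/- Modulo a prime of degree one every element is congruent to an integer, so an additive map is
multiplicative up to the factor `A 1` there; the primes of degree one are too many for the defect
`z` to lie in all of them. -/
lemma map_mul_mul_map_one (hk : k ≠ 0)
    (hA : ∀ T ∈ admissibleSets K k, T.Finite → A '' T ∈ admissibleSets K k) (x y : 𝓞 K) :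
    A (x * y) * A 1 = A x * A y := by
  by_contra hne
  have hz : (A (x * y) * A 1 - A x * A y) * ((discr K).natAbs *
      (Module.finrank ℤ (𝓞 K)).factorial : ℕ) ≠ 0 := by
    simpa [sub_eq_zero, hne, Nat.factorial_ne_zero] using NumberField.discr_ne_zero K
  obtain ⟨Q, hQ, hzQ⟩ := exists_absNorm_prime_notMem hz
  have hp : ¬ Ideal.absNorm Q ∣ (discr K).natAbs * (Module.finrank ℤ (𝓞 K)).factorial := fun h =>
    hzQ (Q.mul_mem_left _ (Q.mem_of_dvd (Nat.cast_dvd_cast h) (Ideal.absNorm_mem Q)))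
  have hrank : Module.finrank ℤ (𝓞 K) < Ideal.absNorm Q := by
    by_contra! h
    exact hp ((hQ.dvd_factorial.2 h).mul_left _)
  obtain ⟨P, hPQ, hAP⟩ := exists_absNorm_eq_forall_apply_mem_pow_iff hk hA hQ hrank
  have hP : (Ideal.absNorm P).Prime := hPQ ▸ hQ
  have hsq := absNorm_natCast_notMem_sq hP fun h => hp (hPQ ▸ h.mul_right _)
  have hmap : ∀ x ∈ P, A x ∈ Q := by
    intro x hx
    obtain ⟨u, hu, v, hv, rfl⟩ := Submodule.mem_sup.1 (le_pow_sup_span_singleton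
      (Ideal.isPrime_of_irreducible_absNorm hP) (ne_bot_of_prime_absNorm hP) hsq k hx)
    obtain ⟨c, rfl⟩ := Ideal.mem_span_singleton.1 hv
    rw [map_add, ← nsmul_eq_mul, map_nsmul, nsmul_eq_mul, hPQ]
    exact Q.add_mem (Ideal.pow_le_self hk ((hAP u).2 hu))
      (Q.mul_mem_right _ (Ideal.absNorm_mem Q))
  exact hzQ (Q.mul_mem_right _
    (map_mul_mul_map_one_sub_mem (A := (A : 𝓞 K →+ 𝓞 K)) hmap (exists_intCast_sub_mem hP) x y))

end Multiplicativity

section UnitMulRingEquiv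

lemma exists_eq_unit_mul_ringEquiv {R S : Type*} [CommRing R] [CommRing S] (A : R ≃+ S)
    (hA : ∀ x y, A (x * y) * A 1 = A x * A y) :
    ∃ (σ : R ≃+* S) (ε : Sˣ), ∀ x, A x = ε * σ x := by
  obtain ⟨u, hu⟩ := A.surjective 1
  have hone : A (u * u) * A 1 = 1 := by rw [hA, hu, one_mul]
  let ε : Sˣ := ⟨A 1, A (u * u), by rw [mul_comm, hone], hone⟩
  have hinv : (↑ε⁻¹ : S) * A 1 = 1 := ε.inv_mul
  let σ : R ≃+* S :=
    { A.trans (AddAut.mulLeft ε⁻¹) with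
      map_mul' := fun x y => by
        change ↑ε⁻¹ * A (x * y) = ↑ε⁻¹ * A x * (↑ε⁻¹ * A y)
        linear_combination ↑ε⁻¹ ^ 2 * hA x y - ↑ε⁻¹ * A (x * y) * hinv }
  exact ⟨σ, ε, fun x => (ε.mul_inv_cancel_left (A x)).symm⟩

lemma eq_unit_mul_mapRingEquiv {K : Type*} [Field K] {A : 𝓞 K ≃+ 𝓞 K} {τ : K ≃+* K} {ε : (𝓞 K)ˣ}
    (hA : ∀ x : 𝓞 K, (A x : K) = ((ε : 𝓞 K) : K) * τ (x : K)) (x : 𝓞 K) :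
    A x = ε * RingOfIntegers.mapRingEquiv τ x :=
  RingOfIntegers.ext (by rw [hA]; simp)

lemma mem_admissibleSets_iff_image_mem {K : Type*} [Field K] [NumberField K] {k : ℕ}
    {A : 𝓞 K ≃+ 𝓞 K} {σ : 𝓞 K ≃+* 𝓞 K} {ε : (𝓞 K)ˣ}
    (hA : ∀ x, A x = ε * σ x) (t : 𝓞 K) (X : Set (𝓞 K)) :
    X ∈ admissibleSets K k ↔ (fun x => t + A x) '' X ∈ admissibleSets K k := by
  have hsymm : ∀ y, A.symm y = (Units.map σ.symm ε⁻¹ : (𝓞 K)ˣ) * σ.symm y := fun y => by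
    rw [AddEquiv.symm_apply_eq, hA, map_mul]
    simp
  refine ⟨fun h => by simpa only [hA] using image_add_mul_mem_admissibleSets σ ε t h, fun h => ?_⟩
  have h := image_add_mul_mem_admissibleSets σ.symm (Units.map σ.symm ε⁻¹) (-A.symm t) h
  simp only [← hsymm, Set.image_image] at h
  simpa using h

end UnitMulRingEquiv

/-- Description of the extended symmetry group of `𝔻_{K,k}`.

Forward direction: every extended symmetry `(A, f)` (with `A` an additive automorphism
of `𝓞 K` and `f` a self-homeomorphism of `𝕏_{K,k}` satisfying
`f(t + X) = A(t) + f(X)`) is of the form `A(x) = ε·τ(x)` and `f(X) = t₀ + ε·τ(X)` for a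
field automorphism `τ` of `K`, a unit `ε ∈ 𝓞 K ˣ` and `t₀ ∈ 𝓞 K`.

Converse direction: every such pair is an extended symmetry; in particular
`x ↦ t₀ + ε·τ(x)` maps `𝕏_{K,k}` into itself and induces a homeomorphism `f`
satisfying the intertwining relation. -/
theorem extended_symmetries {K : Type*} [Field K] [NumberField K]
    (k : ℕ) (hk : 1 ≤ k) :
    (∀ (A : 𝓞 K ≃+ 𝓞 K) (f : ↥(admissibleSets K k) ≃ₜ ↥(admissibleSets K k)),
      (∀ (t : 𝓞 K) (X Y : ↥(admissibleSets K k)),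
        (Y : Set (𝓞 K)) = (t + ·) '' (X : Set (𝓞 K)) →
        ((f Y : Set (𝓞 K))) = (A t + ·) '' ((f X : Set (𝓞 K)))) →
      ∃ (τ : K ≃+* K) (ε : (𝓞 K)ˣ) (t₀ : 𝓞 K),
        (∀ x : 𝓞 K, (A x : K) = ((ε : 𝓞 K) : K) * τ (x : K)) ∧
        ∀ X : ↥(admissibleSets K k),
          ((f X : Set (𝓞 K))) = (fun x => t₀ + A x) '' (X : Set (𝓞 K))) ∧
    (∀ (τ : K ≃+* K) (ε : (𝓞 K)ˣ) (t₀ : 𝓞 K) (A : 𝓞 K ≃+ 𝓞 K),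
      (∀ x : 𝓞 K, (A x : K) = ((ε : 𝓞 K) : K) * τ (x : K)) →
      (∀ X ∈ admissibleSets K k, (fun x => t₀ + A x) '' X ∈ admissibleSets K k) ∧
      ∃ f : ↥(admissibleSets K k) ≃ₜ ↥(admissibleSets K k),
        (∀ X : ↥(admissibleSets K k),
          ((f X : Set (𝓞 K))) = (fun x => t₀ + A x) '' (X : Set (𝓞 K))) ∧
        ∀ (t : 𝓞 K) (X Y : ↥(admissibleSets K k)),
          (Y : Set (𝓞 K)) = (t + ·) '' (X : Set (𝓞 K)) →
          ((f Y : Set (𝓞 K))) = (A t + ·) '' ((f X : Set (𝓞 K)))) := by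
  have hk0 : k ≠ 0 := Nat.one_le_iff_ne_zero.1 hk
  refine ⟨fun A f hf => ?_, fun τ ε t₀ A hA => ?_⟩
  · have hsymm : IsExtendedSymmetry A f := hf
    obtain ⟨t₀, ht₀⟩ := hsymm.exists_forall_apply_eq_image hk0
    obtain ⟨σ, ε, hA⟩ := exists_eq_unit_mul_ringEquiv A <|
      map_mul_mul_map_one hk0 fun _ hT hfin => hsymm.image_mem_admissibleSets hk0 hfin hT
    refine ⟨IsFractionRing.ringEquivOfRingEquiv σ, ε, t₀, fun x => ?_, ht₀⟩
    rw [IsFractionRing.ringEquivOfRingEquiv_algebraMap, hA]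
    exact map_mul (algebraMap (𝓞 K) K) _ _
  · have hadm := mem_admissibleSets_iff_image_mem (k := k) (eq_unit_mul_mapRingEquiv hA) t₀
    exact ⟨fun X => (hadm X).1, translateImageHomeomorph A t₀ hadm, fun _ => rfl,
      isExtendedSymmetry_translateImageHomeomorph A t₀ hadm⟩
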